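/- If U is a dead-ending universe, then * is U-invertible if and only if U = D, the dicot universe. Equivalently, the dicot universe is the only dead-ending universe in which * is invertible. -/

import Mathlib

/-- Augmented (misère) game forms: finitely many Left and Right options,
    possibly adorned with a Left and/or Right tombstone marker. -/
inductive Aug : Type
  | mk (m n : ℕ) (L : Fin m → Aug) (R : Fin n → Aug) (tl tr : Bool) : Aug

namespace Aug

def numL : Aug → ℕ
  | mk m _ _ _ _ _ => m

def numR : Aug → ℕ
  | mk _ n _ _ _ _ => n

def moveL : (G : Aug) → Fin G.numL → Aug
  | mk _ _ L _ _ _ => L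

def moveR : (G : Aug) → Fin G.numR → Aug
  | mk _ _ _ R _ _ => R

def tombL : Aug → Bool
  | mk _ _ _ _ t _ => t

def tombR : Aug → Bool
  | mk _ _ _ _ _ t => t

instance : Zero Aug := ⟨mk 0 0 Fin.elim0 Fin.elim0 false false⟩

/-- Disjunctive sum of augmented forms (tombstones propagate to the sum). -/
protected noncomputable def add : Aug → Aug → Aug := by
  intro x
  induction x with
  | mk m n L R tl tr IHL IHR =>
    intro y
    induction y with
    | mk m' n' L' R' tl' tr' IHL' IHR' =>
      exact mk (m + m') (n + n')
        (Fin.addCases (motive := fun _ => Aug)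
          (fun i => IHL i (mk m' n' L' R' tl' tr')) (fun j => IHL' j))
        (Fin.addCases (motive := fun _ => Aug)
          (fun i => IHR i (mk m' n' L' R' tl' tr')) (fun j => IHR' j))
        (tl || tl') (tr || tr')

noncomputable instance : Add Aug := ⟨Aug.add⟩

/-- Conjugate: swap Left and Right throughout. -/
noncomputable def conj : Aug → Aug := by
  intro G
  induction G with
  | mk m n L R tl tr IHL IHR => exact mk n m IHR IHL tr tl

/-- A genuine game form: no tombstones anywhere. -/
def IsGame : Aug → Prop := by
  intro G
  induction G with
  | mk m n L R tl tr IHL IHR =>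
    exact tl = false ∧ tr = false ∧ (∀ i, IHL i) ∧ (∀ j, IHR j)

/-- Formal birthday (tombstones contribute nothing). -/
noncomputable def birthday : Aug → ℕ := by
  intro G
  induction G with
  | mk m n L R _ _ IHL IHR =>
    exact max (Finset.univ.sup fun i => IHL i + 1) (Finset.univ.sup fun j => IHR j + 1)

/-- `winsF G true` : Left, moving first, wins `G` in misère play
    (a Left end-like position is a first-player win for Left).
    `winsF G false` : Right, moving first, wins `G`. -/
def winsF : Aug → Bool → Prop := by
  intro G
  induction G with
  | mk m n L R tl tr IHL IHR =>
    intro b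
    exact match b with
      | true => tl = true ∨ m = 0 ∨ ∃ i, ¬ IHL i false
      | false => tr = true ∨ n = 0 ∨ ∃ j, ¬ IHR j true

/-- Left outcome is `L`. -/
def oL (G : Aug) : Prop := winsF G true

/-- Right outcome is `L` (Left, moving second, wins). -/
def oR (G : Aug) : Prop := ¬ winsF G false

/-- `outcome G ≥ outcome H` in the misère partial order of outcomes
    (Left prefers larger). -/
def outGe (G H : Aug) : Prop := (oL H → oL G) ∧ (oR H → oR G)

/-- `outcome G = outcome H`. -/
def outEq (G H : Aug) : Prop := (oL G ↔ oL H) ∧ (oR G ↔ oR H)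

/-- `G ≥_A H`. -/
def geA (A : Set Aug) (G H : Aug) : Prop := ∀ X ∈ A, outGe (G + X) (H + X)

/-- `G ≡_A H`. -/
def equivA (A : Set Aug) (G H : Aug) : Prop := ∀ X ∈ A, outEq (G + X) (H + X)

def LeftEnd (G : Aug) : Prop := G.numL = 0
def RightEnd (G : Aug) : Prop := G.numR = 0
def LeftEndLike (G : Aug) : Prop := G.tombL = true ∨ G.numL = 0
def RightEndLike (G : Aug) : Prop := G.tombR = true ∨ G.numR = 0

/-- `G` is Left `A`-strong. -/
def LeftStrong (A : Set Aug) (G : Aug) : Prop :=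
  ∀ X ∈ A, LeftEnd X → winsF (G + X) true

/-- `G` is Right `A`-strong. -/
def RightStrong (A : Set Aug) (G : Aug) : Prop :=
  ∀ X ∈ A, RightEnd X → winsF (G + X) false

/-- Hereditarily closed set of games. -/
def Hereditary (A : Set Aug) : Prop :=
  ∀ G ∈ A, (∀ i, G.moveL i ∈ A) ∧ (∀ j, G.moveR j ∈ A)

/-- An (absolute) universe of misère games. -/
structure IsUniverse (U : Set Aug) : Prop where
  games : ∀ G ∈ U, IsGame G
  zero_mem : (0 : Aug) ∈ U
  add_mem : ∀ G ∈ U, ∀ H ∈ U, G + H ∈ U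
  conj_mem : ∀ G ∈ U, conj G ∈ U
  moveL_mem : ∀ G ∈ U, ∀ i, G.moveL i ∈ U
  moveR_mem : ∀ G ∈ U, ∀ j, G.moveR j ∈ U
  dicotic : ∀ (m n : ℕ) (L : Fin m → Aug) (R : Fin n → Aug), 0 < m → 0 < n →
    (∀ i, L i ∈ U) → (∀ j, R j ∈ U) → mk m n L R false false ∈ U

/-- `Û`: the augmented forms admitting a `U`-expansion, i.e. equivalent
    modulo `U` to some member of `U`. -/
def hatU (U : Set Aug) : Set Aug := {G | ∃ G' ∈ U, equivA U G G'}

/-- `G` is `A`-invertible (with inverse in `A`). -/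
def Invertible (A : Set Aug) (G : Aug) : Prop := ∃ H ∈ A, equivA A (G + H) 0

/-- `G` is `U`-invertible with inverse in `Û`. -/
def InvertibleHat (U : Set Aug) (G : Aug) : Prop := ∃ H ∈ hatU U, equivA U (G + H) 0

/-- `G` is conjugate `A`-invertible. -/
def ConjInvertible (A : Set Aug) (G : Aug) : Prop :=
  conj G ∈ A ∧ equivA A (G + conj G) 0

/-- `A` is a monoid of games: a set of games containing `0`, closed under
    disjunctive sum, on which `≡_A` is a congruence. -/
structure IsMonoidOfGames (A : Set Aug) : Prop where
  games : ∀ G ∈ A, IsGame G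
  zero_mem : (0 : Aug) ∈ A
  add_mem : ∀ G ∈ A, ∀ H ∈ A, G + H ∈ A
  congr : ∀ G ∈ A, ∀ H ∈ A, ∀ J ∈ A, equivA A G H → equivA A (G + J) (H + J)

/-- `U`-simplest form: hereditarily, no dominated options, no reversible
    options, and no unnecessary tombstones. -/
def Simplest (U : Set Aug) : Aug → Prop := by
  intro G
  induction G with
  | mk m n L R tl tr IHL IHR =>
    exact
      (∀ i i' : Fin m, geA U (L i) (L i') → i = i') ∧
      (∀ j j' : Fin n, geA U (R j) (R j') → j = j') ∧
      (∀ i : Fin m, ∀ jj : Fin (L i).numR, ¬ geA U (mk m n L R tl tr) ((L i).moveR jj)) ∧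
      (∀ j : Fin n, ∀ ii : Fin (R j).numL, ¬ geA U ((R j).moveL ii) (mk m n L R tl tr)) ∧
      (tl = true → ¬ equivA U (mk m n L R tl tr) (mk m n L R false tr)) ∧
      (tr = true → ¬ equivA U (mk m n L R tl tr) (mk m n L R tl false)) ∧
      (∀ i, IHL i) ∧ (∀ j, IHR j)

lemma birthday_mk (m n : ℕ) (L : Fin m → Aug) (R : Fin n → Aug) (tl tr : Bool) :
    birthday (mk m n L R tl tr) =
      max (Finset.univ.sup fun i => birthday (L i) + 1)
          (Finset.univ.sup fun j => birthday (R j) + 1) := rfl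

lemma birthday_moveL_lt : ∀ (G : Aug) (i : Fin G.numL), birthday (G.moveL i) < birthday G := by
  intro G
  cases G with
  | mk m n L R tl tr =>
    intro i
    show birthday (L i) < birthday (mk m n L R tl tr)
    rw [birthday_mk]
    have h1 : birthday (L i) + 1 ≤ Finset.univ.sup (fun i => birthday (L i) + 1) :=
      Finset.le_sup (f := fun i => birthday (L i) + 1) (Finset.mem_univ i)
    exact lt_of_lt_of_le (Nat.lt_succ_self _) (h1.trans (le_max_left _ _))

lemma birthday_moveR_lt : ∀ (G : Aug) (j : Fin G.numR), birthday (G.moveR j) < birthday G := by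
  intro G
  cases G with
  | mk m n L R tl tr =>
    intro j
    show birthday (R j) < birthday (mk m n L R tl tr)
    rw [birthday_mk]
    have h1 : birthday (R j) + 1 ≤ Finset.univ.sup (fun j => birthday (R j) + 1) :=
      Finset.le_sup (f := fun j => birthday (R j) + 1) (Finset.mem_univ j)
    exact lt_of_lt_of_le (Nat.lt_succ_self _) (h1.trans (le_max_right _ _))

/-- A disintegrator. -/
def Disintegrator (G : Aug) : Prop :=
  ∃ j : Fin G.numR, (G.moveR j).numL ≠ 0 ∧
    ∀ i : Fin (G.moveR j).numL,
      ¬ winsF ((G.moveR j).moveL i) true ∨ Disintegrator ((G.moveR j).moveL i)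
termination_by birthday G
decreasing_by exact lt_trans (birthday_moveL_lt _ _) (birthday_moveR_lt _ _)

/-- A starkiller. -/
def Starkiller (G : Aug) : Prop :=
  ∃ j : Fin G.numR, winsF (G.moveR j) false ∧
    ∀ i : Fin (G.moveR j).numL,
      ¬ winsF ((G.moveR j).moveL i) true ∨ Starkiller ((G.moveR j).moveL i)
termination_by birthday G
decreasing_by exact lt_trans (birthday_moveL_lt _ _) (birthday_moveR_lt _ _)

def one : Aug := mk 1 0 (fun _ => 0) Fin.elim0 false false
def two : Aug := mk 1 0 (fun _ => one) Fin.elim0 false false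
def star : Aug := mk 1 1 (fun _ => 0) (fun _ => 0) false false
/-- `conjugate(1) = {·|0}`. -/
def oneConj : Aug := mk 0 1 Fin.elim0 (fun _ => 0) false false
/-- `{·|2}`. -/
def endTwo : Aug := mk 0 1 Fin.elim0 (fun _ => two) false false

/-- `n` copies of `G` summed. -/
noncomputable def nCopies : ℕ → Aug → Aug
  | 0, _ => 0
  | n + 1, G => nCopies n G + G

/-- Dicot: every subposition has both or neither kind of option. -/
def Dicot : Aug → Prop := by
  intro G
  induction G with
  | mk m n L R _ _ IHL IHR => exact (m = 0 ↔ n = 0) ∧ (∀ i, IHL i) ∧ (∀ j, IHR j)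

/-- Hereditarily a Left end. -/
def LeftEndHered : Aug → Prop := by
  intro G
  induction G with
  | mk m n L R _ _ IHL IHR => exact m = 0 ∧ (∀ j, IHR j)

/-- Hereditarily a Right end. -/
def RightEndHered : Aug → Prop := by
  intro G
  induction G with
  | mk m n L R _ _ IHL IHR => exact n = 0 ∧ (∀ i, IHL i)

/-- Dead-ending: once a player has no move in a subposition, that player
    never again has a move. -/
def DeadEnding : Aug → Prop := by
  intro G
  induction G with
  | mk m n L R tl tr IHL IHR =>
    exact (m = 0 → LeftEndHered (mk m n L R tl tr)) ∧
      (n = 0 → RightEndHered (mk m n L R tl tr)) ∧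
      (∀ i, IHL i) ∧ (∀ j, IHR j)

/-- Left weak set of games. -/
def LeftWeak (A : Set Aug) : Prop := ∀ G : Aug, LeftStrong A G ↔ LeftEndLike G

/-- Right weak set of games. -/
def RightWeak (A : Set Aug) : Prop := ∀ G : Aug, RightStrong A G ↔ RightEndLike G

end Aug

/-!
Modulo dicots `* + * = 0`: in a dicot universe `*` is its own inverse, because in `* + * + X` a move
in one `*` is answered in the other, and once `X` is exhausted the player to move turns `*` into `0`
to leave the opponent with `*`, a loss for the player who has to move there.

If a dead-ending universe `U` is not dicot, a Left end with a Right move leads by play to a Left end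
`K` in `U` with the option `0` for Right, in essence the starkiller `{· | 0}`. Left moving first
wins `K`; we show that she loses `* + J + K` for every `J` with `* + J ≤ 0` modulo `U`, so that no
`J` is an inverse of `*`. By the maintenance property, which test games built by dicotic closure
yield, each Left move in such a `J` can be answered by Right with `J'` such that `* + J' ≤ 0`,
unless it already leads to a position `≤ 0`. So Right keeps the invariant until he can profitably
move from `K` to `0`.

For this it remains to see that such a `J` is not a Left end. Otherwise Right moving first wins
`conj J`, while Left moving second wins `* + J + conj J`: she mirrors Right's moves in `J`, and when
Right moves from `*` to `0` she is the first to play in the symmetric race `J + conj J`.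
-/

namespace Aug

variable {G H J K X : Aug} {U : Set Aug} {b : Bool}

/-- The options of `G` for one player, as a set: those of Left for `b = true`, those of Right for
`b = false`, in accordance with `winsF`. It lets one argument serve both players. -/
def options : Bool → Aug → Set Aug
  | true, G => Set.range G.moveL
  | false, G => Set.range G.moveR

lemma finite_options (b : Bool) (G : Aug) : (options b G).Finite := by
  cases b <;> exact Set.finite_range _

lemma birthday_lt_of_mem_options (h : H ∈ options b G) : birthday H < birthday G := by
  cases b
  · obtain ⟨j, rfl⟩ := h
    exact birthday_moveR_lt G j
  · obtain ⟨i, rfl⟩ := h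
    exact birthday_moveL_lt G i

lemma options_true_eq_empty_iff : options true G = ∅ ↔ G.numL = 0 := by
  rw [options, Set.range_eq_empty_iff, ← Fintype.card_eq_zero_iff, Fintype.card_fin]

lemma options_false_eq_empty_iff : options false G = ∅ ↔ G.numR = 0 := by
  rw [options, Set.range_eq_empty_iff, ← Fintype.card_eq_zero_iff, Fintype.card_fin]

@[simp]
lemma options_zero (b : Bool) : options b 0 = ∅ := by
  cases b
  · exact options_false_eq_empty_iff.2 rfl
  · exact options_true_eq_empty_iff.2 rfl

@[simp]
lemma options_star (b : Bool) : options b star = {0} := by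
  cases b <;> exact Set.range_const (ι := Fin 1)

lemma range_fin_append {α : Type*} {m n : ℕ} (f : Fin m → α) (g : Fin n → α) :
    Set.range (Fin.append f g) = Set.range f ∪ Set.range g := by
  have append_comp : Fin.append f g ∘ finSumFinEquiv = Sum.elim f g := by
    ext (i | j) <;> simp
  rw [← finSumFinEquiv.surjective.range_comp, append_comp, Set.Sum.elim_range]

lemma mk_add_mk (m n m' n' : ℕ) (L : Fin m → Aug) (R : Fin n → Aug) (L' : Fin m' → Aug)
    (R' : Fin n' → Aug) (tl tr tl' tr' : Bool) :
    mk m n L R tl tr + mk m' n' L' R' tl' tr' = mk (m + m') (n + n')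
      (Fin.append (fun i => L i + mk m' n' L' R' tl' tr') fun i => mk m n L R tl tr + L' i)
      (Fin.append (fun j => R j + mk m' n' L' R' tl' tr') fun j => mk m n L R tl tr + R' j)
      (tl || tl') (tr || tr') :=
  rfl

lemma options_add (b : Bool) (G H : Aug) :
    options b (G + H) = (· + H) '' options b G ∪ (G + ·) '' options b H := by
  cases b <;> simp only [options, ← Set.range_comp] <;> cases G <;> cases H <;> rw [mk_add_mk] <;>
    exact range_fin_append _ _

lemma options_conj (b : Bool) (G : Aug) : options b (conj G) = conj '' options (!b) G := by
  cases b <;> simp only [Bool.not_true, Bool.not_false, options, ← Set.range_comp] <;>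
    cases G <;> rfl

lemma isGame_iff : IsGame G ↔
    (G.tombL = false ∧ G.tombR = false) ∧ ∀ b, ∀ H ∈ options b G, IsGame H := by
  simp only [Bool.forall_bool, options, Set.forall_mem_range]
  cases G
  constructor
  · rintro ⟨hl, hr, hL, hR⟩
    exact ⟨⟨hl, hr⟩, hR, hL⟩
  · rintro ⟨⟨hl, hr⟩, hR, hL⟩
    exact ⟨hl, hr, hL, hR⟩

lemma dicot_iff : Dicot G ↔
    (options true G = ∅ ↔ options false G = ∅) ∧ ∀ b, ∀ H ∈ options b G, Dicot H := by
  rw [options_true_eq_empty_iff, options_false_eq_empty_iff, Bool.forall_bool]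
  simp only [options, Set.forall_mem_range]
  cases G
  exact and_congr_right' and_comm

lemma leftEndHered_iff : LeftEndHered G ↔
    options true G = ∅ ∧ ∀ H ∈ options false G, LeftEndHered H := by
  rw [options_true_eq_empty_iff, options, Set.forall_mem_range]
  cases G
  rfl

lemma DeadEnding.leftEndHered (h : DeadEnding G) (hG : options true G = ∅) : LeftEndHered G := by
  rw [options_true_eq_empty_iff] at hG
  cases G
  exact h.1 hG

lemma IsGame.of_mem_options (hG : IsGame G) (h : H ∈ options b G) : IsGame H :=
  (isGame_iff.1 hG).2 b H h

lemma isGame_zero : IsGame 0 :=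
  isGame_iff.2 ⟨⟨rfl, rfl⟩, by simp⟩

lemma isGame_star : IsGame star :=
  isGame_iff.2 ⟨⟨rfl, rfl⟩, by simp [isGame_zero]⟩

lemma IsGame.conj (hG : IsGame G) : IsGame G.conj := by
  induction G with
  | mk m n L R tl tr ihL ihR =>
    obtain ⟨hl, hr, hL, hR⟩ := hG
    exact ⟨hr, hl, fun j => ihR j (hR j), fun i => ihL i (hL i)⟩

lemma IsGame.add {G H : Aug} (hG : IsGame G) (hH : IsGame H) : IsGame (G + H) := by
  refine isGame_iff.2 ⟨?_, fun b K hK => ?_⟩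
  · obtain ⟨⟨hGl, hGr⟩, -⟩ := isGame_iff.1 hG
    obtain ⟨⟨hHl, hHr⟩, -⟩ := isGame_iff.1 hH
    cases G
    cases H
    exact ⟨Bool.or_eq_false_iff.2 ⟨hGl, hHl⟩, Bool.or_eq_false_iff.2 ⟨hGr, hHr⟩⟩
  · rw [options_add] at hK
    obtain ⟨G', hG', rfl⟩ | ⟨H', hH', rfl⟩ := hK
    · exact (hG.of_mem_options hG').add hH
    · exact hG.add (hH.of_mem_options hH')
termination_by birthday G + birthday H
decreasing_by
  · exact Nat.add_lt_add_right (birthday_lt_of_mem_options hG') _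
  · exact Nat.add_lt_add_left (birthday_lt_of_mem_options hH') _

lemma IsGame.winsF_iff (hG : IsGame G) :
    winsF G b ↔ options b G = ∅ ∨ ∃ G' ∈ options b G, ¬ winsF G' !b := by
  obtain ⟨⟨hl, hr⟩, -⟩ := isGame_iff.1 hG
  cases b
  · rw [options_false_eq_empty_iff, options, Set.exists_range_iff]
    cases G
    exact or_iff_right (Bool.eq_false_iff.1 hr)
  · rw [options_true_eq_empty_iff, options, Set.exists_range_iff]
    cases G
    exact or_iff_right (Bool.eq_false_iff.1 hl)

lemma IsGame.winsF_add_iff (hG : IsGame G) (hH : IsGame H) :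
    winsF (G + H) b ↔ (options b G = ∅ ∧ options b H = ∅) ∨
      (∃ G' ∈ options b G, ¬ winsF (G' + H) !b) ∨ ∃ H' ∈ options b H, ¬ winsF (G + H') !b := by
  simp only [(hG.add hH).winsF_iff, options_add, Set.union_empty_iff, Set.image_eq_empty,
    Set.mem_union, or_and_right, exists_or, Set.exists_mem_image]

lemma IsGame.winsF_add_comm {G H : Aug} (hG : IsGame G) (hH : IsGame H) (b : Bool) :
    winsF (G + H) b ↔ winsF (H + G) b := by
  have moves_in_G : (∃ G' ∈ options b G, ¬ winsF (G' + H) !b) ↔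
      ∃ G' ∈ options b G, ¬ winsF (H + G') !b :=
    exists_congr fun G' => and_congr_right fun hG' =>
      not_congr ((hG.of_mem_options hG').winsF_add_comm hH _)
  have moves_in_H : (∃ H' ∈ options b H, ¬ winsF (G + H') !b) ↔
      ∃ H' ∈ options b H, ¬ winsF (H' + G) !b :=
    exists_congr fun H' => and_congr_right fun hH' =>
      not_congr (hG.winsF_add_comm (hH.of_mem_options hH') _)
  rw [hG.winsF_add_iff hH, hH.winsF_add_iff hG, moves_in_G, moves_in_H, and_comm,
    or_comm (a := ∃ _, _)]
termination_by birthday G + birthday H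
decreasing_by
  · exact Nat.add_lt_add_right (birthday_lt_of_mem_options hG') _
  · exact Nat.add_lt_add_left (birthday_lt_of_mem_options hH') _

lemma mk_congr {m m' n n' : ℕ} (hm : m = m') (hn : n = n') {L : Fin m → Aug} {L' : Fin m' → Aug}
    {R : Fin n → Aug} {R' : Fin n' → Aug} (tl tr : Bool)
    (hL : L = L' ∘ Fin.cast hm) (hR : R = R' ∘ Fin.cast hn) :
    mk m n L R tl tr = mk m' n' L' R' tl tr := by
  subst hm hn hL hR
  rfl

lemma IsGame.eq_zero (hG : IsGame G) (h : ∀ b, options b G = ∅) : G = 0 := by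
  have hL := options_true_eq_empty_iff.1 (h true)
  have hR := options_false_eq_empty_iff.1 (h false)
  cases G
  obtain ⟨rfl, rfl, -⟩ := hG
  exact mk_congr hL hR _ _ (funext fun i => (i.cast hL).elim0) (funext fun j => (j.cast hR).elim0)

lemma zero_def : (0 : Aug) = mk 0 0 Fin.elim0 Fin.elim0 false false :=
  rfl

noncomputable instance : AddZeroClass Aug where
  zero_add G := by
    induction G with
    | mk m n L R tl tr ihL ihR =>
      rw [zero_def, mk_add_mk, Bool.false_or, Bool.false_or, ← zero_def]
      simp only [ihL, ihR]
      exact mk_congr (zero_add m) (zero_add n) tl tr (Fin.append_left_nil _ L rfl)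
        (Fin.append_left_nil _ R rfl)
  add_zero G := by
    induction G with
    | mk m n L R tl tr ihL ihR =>
      rw [zero_def, mk_add_mk, Bool.or_false, Bool.or_false, ← zero_def]
      simp only [ihL, ihR]
      exact mk_congr (add_zero m) (add_zero n) tl tr (Fin.append_right_nil L _ rfl)
        (Fin.append_right_nil R _ rfl)

lemma winsF_zero (b : Bool) : winsF 0 b :=
  isGame_zero.winsF_iff.2 (Or.inl (options_zero b))

lemma IsGame.winsF_of_mem_options (hG : IsGame G) (h : H ∈ options b G) (hH : ¬ winsF H !b) :
    winsF G b :=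
  hG.winsF_iff.2 (Or.inr ⟨H, h, hH⟩)

lemma not_winsF_star (b : Bool) : ¬ winsF star b := by
  simp [isGame_star.winsF_iff, winsF_zero]

lemma self_mem_options_star_add (b : Bool) (J : Aug) : J ∈ options b (star + J) := by
  simp [options_add]

lemma IsGame.winsF_star_add_add_iff (hJ : IsGame J) (hX : IsGame X) :
    winsF (star + J + X) b ↔ ¬ winsF (J + X) !b ∨
      (∃ J' ∈ options b J, ¬ winsF (star + J' + X) !b) ∨
        ∃ X' ∈ options b X, ¬ winsF (star + J + X') !b := by
  simp [(isGame_star.add hJ).winsF_add_iff hX, options_add, or_and_right,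
    exists_or, or_assoc, (Set.insert_nonempty _ _).ne_empty]

lemma winsF_star_add_star_add {X : Aug} (hX : IsGame X) (hd : Dicot X) (b : Bool) :
    winsF (star + star + X) b ↔ winsF X b := by
  have moves_in_X : (∃ X' ∈ options b X, ¬ winsF (star + star + X') !b) ↔
      ∃ X' ∈ options b X, ¬ winsF X' !b :=
    exists_congr fun X' => and_congr_right fun hX' => not_congr <|
      winsF_star_add_star_add (hX.of_mem_options hX') ((dicot_iff.1 hd).2 b X' hX') _
  have move_in_stars (h : ¬ winsF (star + X) !b) : winsF X b := by
    by_contra hXb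
    exact h ((isGame_star.add hX).winsF_of_mem_options (self_mem_options_star_add _ X) (by simpa))
  have star_wins_of_end (h : options b X = ∅) : ¬ winsF (star + X) !b := by
    have hX0 : X = 0 := hX.eq_zero fun c => by
      have end_iff := (dicot_iff.1 hd).1
      cases b <;> cases c <;> simp_all
    rw [hX0, add_zero]
    exact not_winsF_star _
  rw [isGame_star.winsF_star_add_add_iff hX, moves_in_X]
  simp only [options_star, Set.mem_singleton_iff, exists_eq_left, add_zero]
  constructor
  · rintro (h | h | h)
    · exact move_in_stars h
    · exact move_in_stars h
    · exact hX.winsF_iff.2 (Or.inr h)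
  · intro h
    exact (hX.winsF_iff.1 h).imp star_wins_of_end Or.inr
termination_by birthday X
decreasing_by exact birthday_lt_of_mem_options hX'

/-- In `k` consecutive moves of his own, Right can bring `G` to a position where he has no move. -/
def RightRun : ℕ → Aug → Prop
  | 0, G => options false G = ∅
  | k + 1, G => ∃ G' ∈ options false G, RightRun k G'

lemma exists_rightRun (G : Aug) : ∃ k, RightRun k G := by
  obtain h | ⟨G', hG'⟩ := (options false G).eq_empty_or_nonempty
  · exact ⟨0, h⟩
  · obtain ⟨k, hk⟩ := exists_rightRun G'
    exact ⟨k + 1, G', hG', hk⟩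
termination_by birthday G
decreasing_by exact birthday_lt_of_mem_options hG'

lemma LeftEndHered.options_true_eq_empty (h : LeftEndHered G) : options true G = ∅ :=
  (leftEndHered_iff.1 h).1

lemma LeftEndHered.of_mem_options (h : LeftEndHered G) (hH : H ∈ options false G) :
    LeftEndHered H :=
  (leftEndHered_iff.1 h).2 H hH

lemma LeftEndHered.options_false_conj (h : LeftEndHered G) : options false (conj G) = ∅ := by
  rw [options_conj, Bool.not_false, h.options_true_eq_empty, Set.image_empty]

-- The sum is a race: Right can only move in `J` and Left only in `conj K`, and in misère play
-- whoever exhausts his own component first wins.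
lemma winsF_add_conj_of_rightRun {k : ℕ} (hJ : IsGame J) (hK : IsGame K) (hJe : LeftEndHered J)
    (hKe : LeftEndHered K) (hrun : RightRun k K) (hmin : ∀ l < k, ¬ RightRun l J) :
    winsF (J + conj K) true := by
  induction k generalizing J K with
  | zero =>
    refine (hJ.winsF_add_iff hK.conj).2 (Or.inl ⟨hJe.options_true_eq_empty, ?_⟩)
    rw [options_conj, Bool.not_true, show options false K = ∅ from hrun, Set.image_empty]
  | succ k ih =>
    obtain ⟨K', hK', hrun'⟩ := hrun
    have hK'g := hK.of_mem_options hK'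
    have hK'e := hKe.of_mem_options hK'
    have right_loses : ¬ winsF (J + conj K') false := by
      rw [hJ.winsF_add_iff hK'g.conj, hK'e.options_false_conj]
      rintro (⟨hJ0, -⟩ | ⟨J', hJ', h⟩ | ⟨_, h, -⟩)
      · exact hmin 0 k.succ_pos hJ0
      · exact h <| ih (hJ.of_mem_options hJ') hK'g (hJe.of_mem_options hJ') hK'e hrun'
          fun l hl hJ'l => hmin (l + 1) (Nat.succ_lt_succ hl) ⟨J', hJ', hJ'l⟩
      · exact h
    refine (hJ.winsF_add_iff hK.conj).2 (Or.inr (Or.inr ⟨conj K', ?_, right_loses⟩))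
    rw [options_conj]
    exact Set.mem_image_of_mem conj hK'

lemma winsF_add_conj_self (hJ : IsGame J) (hJe : LeftEndHered J) : winsF (J + conj J) true := by
  classical
  exact winsF_add_conj_of_rightRun hJ hJ hJe hJe (Nat.find_spec (exists_rightRun J))
    fun _ => Nat.find_min (exists_rightRun J)

lemma not_winsF_star_add_add_conj {J : Aug} (hJ : IsGame J) (hJe : LeftEndHered J) :
    ¬ winsF (star + J + conj J) false := by
  rw [hJ.winsF_star_add_add_iff hJ.conj, hJe.options_false_conj]
  rintro (h | ⟨J', hJ', h⟩ | ⟨_, h, -⟩)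
  · exact h (winsF_add_conj_self hJ hJe)
  · have hJ'g := hJ.of_mem_options hJ'
    have mirror_move : conj J' ∈ options true (conj J) := by
      rw [options_conj]
      exact Set.mem_image_of_mem conj hJ'
    exact h <| (hJ'g.winsF_star_add_add_iff hJ.conj).2 <| Or.inr <| Or.inr
      ⟨conj J', mirror_move, not_winsF_star_add_add_conj hJ'g (hJe.of_mem_options hJ')⟩
  · exact h
termination_by birthday J
decreasing_by exact birthday_lt_of_mem_options hJ'

lemma IsUniverse.mem_of_mem_options (hU : IsUniverse U) (hG : G ∈ U) (h : H ∈ options b G) :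
    H ∈ U := by
  cases b
  · obtain ⟨j, rfl⟩ := h
    exact hU.moveR_mem G hG j
  · obtain ⟨i, rfl⟩ := h
    exact hU.moveL_mem G hG i

lemma IsUniverse.exists_options_eq (hU : IsUniverse U) {S T : Set Aug} (hS : S.Finite)
    (hS₀ : S.Nonempty) (hSU : S ⊆ U) (hT : T.Finite) (hT₀ : T.Nonempty) (hTU : T ⊆ U) :
    ∃ X ∈ U, options true X = S ∧ options false X = T := by
  obtain ⟨m, L, rfl⟩ := hS.fin_embedding
  obtain ⟨n, R, rfl⟩ := hT.fin_embedding
  have hm : 0 < m := Fin.pos_iff_nonempty.2 (Set.range_nonempty_iff_nonempty.1 hS₀)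
  have hn : 0 < n := Fin.pos_iff_nonempty.2 (Set.range_nonempty_iff_nonempty.1 hT₀)
  exact ⟨Aug.mk m n L R false false, hU.dicotic m n L R hm hn (fun i => hSU ⟨i, rfl⟩)
    fun j => hTU ⟨j, rfl⟩, rfl, rfl⟩

lemma IsUniverse.star_mem (hU : IsUniverse U) : star ∈ U :=
  hU.dicotic 1 1 _ _ one_pos one_pos (fun _ => hU.zero_mem) fun _ => hU.zero_mem

lemma IsUniverse.mem_of_dicot (hU : IsUniverse U) {G : Aug} (hG : IsGame G) (hd : Dicot G) :
    G ∈ U := by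
  induction G with
  | mk m n L R tl tr ihL ihR =>
    obtain ⟨rfl, rfl, hL, hR⟩ := id hG
    obtain ⟨hmn, hdL, hdR⟩ := id hd
    obtain rfl | hm := m.eq_zero_or_pos
    · obtain rfl : n = 0 := hmn.1 rfl
      rw [hG.eq_zero]
      · exact hU.zero_mem
      · rintro (_ | _)
        · exact options_false_eq_empty_iff.2 rfl
        · exact options_true_eq_empty_iff.2 rfl
    · have hn : 0 < n := Nat.pos_of_ne_zero fun h => hm.ne' (hmn.2 h)
      exact hU.dicotic m n L R hm hn (fun i => ihL i (hL i) (hdL i)) fun j => ihR j (hR j) (hdR j)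

lemma IsUniverse.dicot_of_forall_leftEnd (hU : IsUniverse U)
    (hends : ∀ G ∈ U, options true G = ∅ → options false G = ∅) {G : Aug} (hG : G ∈ U) :
    Dicot G := by
  refine dicot_iff.2 ⟨⟨hends G hG, fun h => ?_⟩, fun b H hH =>
    hU.dicot_of_forall_leftEnd hends (hU.mem_of_mem_options hG hH)⟩
  have hconj := hends (conj G) (hU.conj_mem G hG)
  simpa [options_conj, h] using hconj
termination_by birthday G
decreasing_by exact birthday_lt_of_mem_options hH

lemma IsUniverse.exists_not_winsF_add_false_of_responses (hU : IsUniverse U) {T : Set Aug}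
    {R : Aug} (hG : G ∈ U) (hTU : T ⊆ U) (hT₀ : 0 ∈ T)
    (hT : ∀ G' ∈ options false G, ∃ Y ∈ T, ¬ winsF (G' + Y) false)
    (hR : R ∈ U) (hGR : winsF (G + R) true) :
    ∃ X ∈ U, (options true X).Nonempty ∧ options true X ⊆ T ∧ options false X = {R} ∧
      ¬ winsF (G + X) false := by
  choose! f hfT hf using hT
  have hS : insert 0 (f '' options false G) ⊆ T :=
    Set.insert_subset hT₀ (Set.image_subset_iff.2 hfT)
  obtain ⟨X, hX, hXL, hXR⟩ := hU.exists_options_eq (((finite_options false G).image f).insert 0)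
    (Set.insert_nonempty _ _) (hS.trans hTU) (Set.finite_singleton R) (Set.singleton_nonempty R)
    (Set.singleton_subset_iff.2 hR)
  refine ⟨X, hX, hXL ▸ Set.insert_nonempty _ _, hXL ▸ hS, hXR, ?_⟩
  rw [(hU.games G hG).winsF_add_iff (hU.games X hX), hXR]
  rintro (⟨-, h⟩ | ⟨G', hG', h⟩ | ⟨_, rfl, h⟩)
  · exact Set.singleton_ne_empty R h
  · refine h ?_
    have hG'g := hU.games G' (hU.mem_of_mem_options hG hG')
    refine (hG'g.winsF_add_iff (hU.games X hX)).2 (Or.inr (Or.inr ⟨f G', ?_, hf G' hG'⟩))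
    exact hXL ▸ Set.mem_insert_of_mem _ (Set.mem_image_of_mem f hG')
  · exact h hGR

lemma IsUniverse.exists_not_winsF_add_false (hU : IsUniverse U) {G : Aug} (hG : G ∈ U) :
    ∃ X ∈ U, ¬ winsF (G + X) false := by
  have first : ∃ R ∈ U, winsF (G + R) true := by
    obtain h | ⟨G', hG'⟩ := (options true G).eq_empty_or_nonempty
    · exact ⟨0, hU.zero_mem, by rw [add_zero]; exact (hU.games G hG).winsF_iff.2 (Or.inl h)⟩
    · have hG'U := hU.mem_of_mem_options hG hG'
      obtain ⟨R, hR, hwin⟩ := hU.exists_not_winsF_add_false hG'U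
      exact ⟨R, hR, ((hU.games G hG).winsF_add_iff (hU.games R hR)).2
        (Or.inr (Or.inl ⟨G', hG', hwin⟩))⟩
  obtain ⟨R, hR, hGR⟩ := first
  obtain ⟨X, hX, -, -, -, hwin⟩ := hU.exists_not_winsF_add_false_of_responses hG subset_rfl
    hU.zero_mem (fun G' hG' => hU.exists_not_winsF_add_false (hU.mem_of_mem_options hG hG')) hR hGR
  exact ⟨X, hX, hwin⟩
termination_by birthday G
decreasing_by
  all_goals exact birthday_lt_of_mem_options hG'

lemma IsUniverse.exists_winsF_add_true (hU : IsUniverse U) (hG : G ∈ U) :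
    ∃ X ∈ U, winsF (G + X) true := by
  obtain ⟨Y, hY, hwin⟩ := hU.exists_not_winsF_add_false hG
  obtain ⟨X, hX, hXL, -⟩ := hU.exists_options_eq (Set.finite_singleton Y) (Set.singleton_nonempty Y)
    (Set.singleton_subset_iff.2 hY) (Set.finite_singleton 0) (Set.singleton_nonempty 0)
    (Set.singleton_subset_iff.2 hU.zero_mem)
  exact ⟨X, hX, ((hU.games G hG).winsF_add_iff (hU.games X hX)).2
    (Or.inr (Or.inr ⟨Y, hXL ▸ rfl, hwin⟩))⟩

lemma geA_zero_iff : geA U 0 G ↔ ∀ X ∈ U,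
    (winsF (G + X) true → winsF X true) ∧ (winsF X false → winsF (G + X) false) := by
  simp only [geA, outGe, oL, oR, zero_add, not_imp_not]

lemma IsUniverse.exists_winsF_and_not_winsF_add_of_not_geA_zero (hU : IsUniverse U) (hG : G ∈ U)
    (h : ¬ geA U 0 G) : ∃ Y ∈ U, winsF Y false ∧ ¬ winsF (G + Y) false := by
  -- A test `X` that Left, moving first, loses alone but wins with `G` becomes the only Right option
  -- of a test `Y` that Right, moving first, wins alone but loses with `G`.
  by_contra! hsep
  refine h (geA_zero_iff.2 fun X hX => ⟨fun hGX => ?_, hsep X hX⟩)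
  by_contra hXl
  obtain ⟨Y, hY, -, -, hYR, hwin⟩ := hU.exists_not_winsF_add_false_of_responses hG subset_rfl
    hU.zero_mem (fun G' hG' => hU.exists_not_winsF_add_false (hU.mem_of_mem_options hG hG')) hX hGX
  exact hwin (hsep Y hY ((hU.games Y hY).winsF_of_mem_options (hYR ▸ rfl) hXl))

lemma IsUniverse.exists_geA_zero_of_mem_options (hU : IsUniverse U) (hG : G ∈ U)
    (h : geA U 0 G) (hH : H ∈ options true G) : ∃ K ∈ options false H, geA U 0 K := by
  by_contra! hno
  have hHU := hU.mem_of_mem_options hG hH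
  obtain ⟨R, hR, hHR⟩ := hU.exists_winsF_add_true hHU
  obtain ⟨X, hX, hX₀, hXL, -, hwin⟩ := hU.exists_not_winsF_add_false_of_responses
    (T := {Y ∈ U | winsF Y false}) hHU (Set.sep_subset _ _) ⟨hU.zero_mem, winsF_zero false⟩
    (fun K hK => by
      obtain ⟨Y, hY, hYr, hKY⟩ :=
        hU.exists_winsF_and_not_winsF_add_of_not_geA_zero (hU.mem_of_mem_options hHU hK) (hno K hK)
      exact ⟨Y, ⟨hY, hYr⟩, hKY⟩) hR hHR
  have hGX : winsF (G + X) true := ((hU.games G hG).winsF_add_iff (hU.games X hX)).2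
    (Or.inr (Or.inl ⟨H, hH, hwin⟩))
  obtain hX₁ | ⟨Y, hY, hYr⟩ := (hU.games X hX).winsF_iff.1 ((geA_zero_iff.1 h X hX).1 hGX)
  · exact hX₀.ne_empty hX₁
  · exact hYr (hXL hY).2

lemma IsUniverse.winsF_false_of_geA_zero (hU : IsUniverse U) (h : geA U 0 G) :
    winsF G false := by
  simpa [winsF_zero] using (geA_zero_iff.1 h 0 hU.zero_mem).2

lemma IsUniverse.not_winsF_star_add_of_geA_zero (hU : IsUniverse U) (hG : G ∈ U)
    (h : geA U 0 G) : ¬ winsF (star + G) true := by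
  rw [isGame_star.winsF_add_comm (hU.games G hG)]
  exact fun hwin => not_winsF_star true ((geA_zero_iff.1 h star hU.star_mem).1 hwin)

lemma IsUniverse.geA_zero_or_exists_geA_zero_star_add (hU : IsUniverse U) (hJ : J ∈ U)
    (h : geA U 0 (star + J)) (hH : H ∈ options true J) :
    geA U 0 H ∨ ∃ H' ∈ options false H, geA U 0 (star + H') := by
  have hmem : star + H ∈ options true (star + J) := by
    rw [options_add]
    exact Or.inr (Set.mem_image_of_mem _ hH)
  obtain ⟨_, hK, hge⟩ :=
    hU.exists_geA_zero_of_mem_options (hU.add_mem star hU.star_mem J hJ) h hmem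
  rw [options_add, options_star, Set.image_singleton, zero_add] at hK
  obtain rfl | ⟨H', hH', rfl⟩ := hK
  · exact Or.inl hge
  · exact Or.inr ⟨H', hH', hge⟩

lemma IsUniverse.options_true_ne_empty_of_geA_zero_star_add (hU : IsUniverse U)
    (hDE : ∀ G ∈ U, DeadEnding G) (hJ : J ∈ U) (h : geA U 0 (star + J)) :
    options true J ≠ ∅ := by
  intro hJ₀
  have hJe := (hDE J hJ).leftEndHered hJ₀
  have hconj : conj J ∈ U := hU.conj_mem J hJ
  have right_wins_conj : winsF (conj J) false :=
    (hU.games _ hconj).winsF_iff.2 (Or.inl hJe.options_false_conj)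
  exact not_winsF_star_add_add_conj (hU.games J hJ) hJe
    ((geA_zero_iff.1 h _ hconj).2 right_wins_conj)

lemma IsUniverse.not_winsF_of_geA_zero_star_add (hU : IsUniverse U)
    (hDE : ∀ G ∈ U, DeadEnding G) {J : Aug} (hJ : J ∈ U) (h : geA U 0 (star + J)) :
    ¬ winsF J true := by
  rw [(hU.games J hJ).winsF_iff]
  rintro (hJ₀ | ⟨H, hH, hwin⟩)
  · exact hU.options_true_ne_empty_of_geA_zero_star_add hDE hJ h hJ₀
  · have hHU := hU.mem_of_mem_options hJ hH
    obtain hge | ⟨H', hH', hge⟩ := hU.geA_zero_or_exists_geA_zero_star_add hJ h hH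
    · exact hwin (hU.winsF_false_of_geA_zero hge)
    · exact hwin ((hU.games H hHU).winsF_of_mem_options hH'
        (hU.not_winsF_of_geA_zero_star_add hDE (hU.mem_of_mem_options hHU hH') hge))
termination_by birthday J
decreasing_by exact (birthday_lt_of_mem_options hH').trans (birthday_lt_of_mem_options hH)

lemma IsUniverse.not_winsF_star_add_add_of_geA_zero_star_add (hU : IsUniverse U)
    (hDE : ∀ G ∈ U, DeadEnding G) {J : Aug} (hJ : J ∈ U) (h : geA U 0 (star + J)) (hK : K ∈ U)
    (hK₀ : options true K = ∅) (hK₁ : 0 ∈ options false K) : ¬ winsF (star + J + K) true := by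
  rw [(hU.games J hJ).winsF_star_add_add_iff (hU.games K hK), hK₀]
  rintro (hwin | ⟨H, hH, hwin⟩ | ⟨_, hmem, -⟩)
  · refine hwin (((hU.games J hJ).winsF_add_iff (hU.games K hK)).2 (Or.inr (Or.inr ⟨0, hK₁, ?_⟩)))
    rw [add_zero]
    exact hU.not_winsF_of_geA_zero_star_add hDE hJ h
  · have hHU := hU.mem_of_mem_options hJ hH
    refine hwin (((hU.games H hHU).winsF_star_add_add_iff (hU.games K hK)).2 (Or.inr ?_))
    obtain hge | ⟨H', hH', hge⟩ := hU.geA_zero_or_exists_geA_zero_star_add hJ h hH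
    · refine Or.inr ⟨0, hK₁, ?_⟩
      rw [add_zero]
      exact hU.not_winsF_star_add_of_geA_zero hHU hge
    · exact Or.inl ⟨H', hH', hU.not_winsF_star_add_add_of_geA_zero_star_add hDE
        (hU.mem_of_mem_options hHU hH') hge hK hK₀ hK₁⟩
  · exact hmem
termination_by birthday J
decreasing_by exact (birthday_lt_of_mem_options hH').trans (birthday_lt_of_mem_options hH)

lemma IsUniverse.not_invertible_star (hU : IsUniverse U) (hDE : ∀ G ∈ U, DeadEnding G)
    (hK : K ∈ U) (hK₀ : options true K = ∅) (hK₁ : 0 ∈ options false K) :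
    ¬ Invertible U star := by
  rintro ⟨J, hJ, hequiv⟩
  have hge : geA U 0 (star + J) := fun X hX => ⟨(hequiv X hX).1.1, (hequiv X hX).2.1⟩
  have left_wins_K : winsF (0 + K) true := by
    rw [zero_add]
    exact (hU.games K hK).winsF_iff.2 (Or.inl hK₀)
  exact hU.not_winsF_star_add_add_of_geA_zero_star_add hDE hJ hge hK hK₀ hK₁
    ((hequiv K hK).1.2 left_wins_K)

lemma IsUniverse.exists_zero_mem_options_of_leftEndHered (hU : IsUniverse U) {G : Aug}
    (hG : G ∈ U) (hGe : LeftEndHered G) (hG₀ : (options false G).Nonempty) :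
    ∃ K ∈ U, options true K = ∅ ∧ 0 ∈ options false K := by
  obtain ⟨H, hH⟩ := hG₀
  have hHU := hU.mem_of_mem_options hG hH
  have hHe := hGe.of_mem_options hH
  obtain hH₀ | hH₀ := (options false H).eq_empty_or_nonempty
  · obtain rfl : H = 0 :=
      (hU.games H hHU).eq_zero (Bool.forall_bool.2 ⟨hH₀, hHe.options_true_eq_empty⟩)
    exact ⟨G, hG, hGe.options_true_eq_empty, hH⟩
  · exact hU.exists_zero_mem_options_of_leftEndHered hHU hHe hH₀
termination_by birthday G
decreasing_by exact birthday_lt_of_mem_options hH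

lemma IsUniverse.dicot_of_invertible_star (hU : IsUniverse U) (hDE : ∀ G ∈ U, DeadEnding G)
    (hinv : Invertible U star) (hG : G ∈ U) : Dicot G := by
  refine hU.dicot_of_forall_leftEnd (fun H hH hH₀ => ?_) hG
  by_contra hH₁
  obtain ⟨K, hK, hK₀, hK₁⟩ := hU.exists_zero_mem_options_of_leftEndHered hH
    ((hDE H hH).leftEndHered hH₀) (Set.nonempty_iff_ne_empty.2 hH₁)
  exact hU.not_invertible_star hDE hK hK₀ hK₁ hinv

lemma IsUniverse.invertible_star_of_dicot (hU : IsUniverse U) (hd : ∀ G ∈ U, Dicot G) :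
    Invertible U star := by
  refine ⟨star, hU.star_mem, fun X hX => ?_⟩
  have hwin := winsF_star_add_star_add (hU.games X hX) (hd X hX)
  rw [zero_add]
  exact ⟨hwin true, not_congr (hwin false)⟩

end Aug

/-- the dicot universe is the only dead-ending universe in which
`*` is invertible. -/
theorem stmt17 (U : Set Aug) (hU : Aug.IsUniverse U)
    (hDE : ∀ G ∈ U, Aug.DeadEnding G) :
    Aug.Invertible U Aug.star ↔ U = {G : Aug | Aug.IsGame G ∧ Aug.Dicot G} := by
  constructor
  · intro hinv
    refine Set.Subset.antisymm (fun G hG => ?_) fun G hG => hU.mem_of_dicot hG.1 hG.2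
    exact ⟨hU.games G hG, hU.dicot_of_invertible_star hDE hinv hG⟩
  · rintro rfl
    exact hU.invertible_star_of_dicot fun _ hG => hG.2
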